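/- For all 1 ≤ i ≠ j ≤ n: Y_i·D_j = (ℛ^{−1})^+_{ji}·D_j·Y_i·ℛ^+_{ij}. Moreover, for all 1 ≤ l ≤ n: Y_l·T^-_{l−1,1}·T^+_{1,l−1}·D_l = q^{−1}·D_l·(T^{−1})^+_{l,n−1}·(T^{−1})^-_{n−1,l}·Y_l. -/

import Mathlib

/-!
The operators `X_i⁻¹`, `Y_i` and `D_i` are Jucys–Murphy type families: they satisfy
`B_i = T_i B_{i+1} T_i`, and the last member commutes with `T_1, …, T_{n-2}`. For two such families
the braid relations propagate a cross relation from the last two indices down to all the others, so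
the relations between `Y` and `D` reduce to `Y_n T_{n-1} D_n = T_{n-1} D_n T_{n-1} Y_n T_{n-1}`.
This one holds since `X_n⁻¹` satisfies it in place of `D_n` and `Y_n` commutes with
`Y_{n-1} = T_{n-1} Y_n T_{n-1}`. Conjugating by products of the `T_k` puts the elements `ℛ` into the
relations for indices that are further apart. The remaining relation comes from
`π⁻¹ X_1⁻¹ = q⁻¹ X_n⁻¹ π⁻¹`.

The relations among the `T_k`, the `X_i` and `π⁻¹` themselves hold on Laurent polynomials because
the difference of the two sides commutes with the variables up to an algebra automorphism and kills
`1`, hence vanishes.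
-/

noncomputable section

/-- The Laurent polynomial ring `R[X₁^{±1}, …, Xₙ^{±1}]` in `n` variables over `R`,
realised as the monoid algebra of the additive monoid `Fin n →₀ ℤ` of exponent vectors. -/
abbrev Laur (R : Type*) [CommRing R] (n : ℕ) : Type _ :=
  AddMonoidAlgebra R (Fin n →₀ ℤ)

variable {R : Type*} [CommRing R] {n : ℕ}

/-- The monomial `c · X^a`. -/
def mono (a : Fin n →₀ ℤ) (c : R) : Laur R n := AddMonoidAlgebra.single a c

/-- The generator `X_i`. -/
def Xel (i : Fin n) : Laur R n := mono (Finsupp.single i 1) 1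

/-- The element `X_i⁻¹`. -/
def XinvEl (i : Fin n) : Laur R n := mono (Finsupp.single i (-1)) 1

/-- Multiplication by a Laurent polynomial, as a linear endomorphism. -/
def mulOp (x : Laur R n) : Module.End R (Laur R n) := LinearMap.mulLeft R x

/-- The operator of multiplication by `X_i`, with `ℕ`-indexing (`0`-based; junk value `1`
out of range). -/
def XOp (i : ℕ) : Module.End R (Laur R n) :=
  if h : i < n then mulOp (Xel ⟨i, h⟩) else 1

/-- The operator of multiplication by `X_i⁻¹`, with `ℕ`-indexing. -/
def XinvOp (i : ℕ) : Module.End R (Laur R n) :=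
  if h : i < n then mulOp (XinvEl ⟨i, h⟩) else 1

/-- Ascending product `f s * f (s+1) * ⋯ * f (s+len-1)` (equal to `1` when `len = 0`). -/
def aF {M : Type*} [Monoid M] (f : ℕ → M) (s len : ℕ) : M :=
  ((List.range' s len).map f).prod

/-- Descending product `f (s+len-1) * ⋯ * f (s+1) * f s` (equal to `1` when `len = 0`). -/
def dF {M : Type*} [Monoid M] (f : ℕ → M) (s len : ℕ) : M :=
  (((List.range' s len).map f).reverse).prod

/-- Integer power `u^z`, where `v` is a designated (two-sided) inverse of `u`. -/
def zpowOp {M : Type*} [Monoid M] (u v : M) (z : ℤ) : M :=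
  if 0 ≤ z then u ^ z.toNat else v ^ (-z).toNat

/-- The element `(ℛ^ε)^{±}_{ij}` of the paper: for `0`-based indices, when `j < i` this is
`f_{j+1}` descending-product, then `mid`, then `g_{j+1}` ascending-product; `1` for `i ≤ j`.
Taking `f = T, g = Ti, mid = (T j)^2` gives `ℛ⁺`;  `f = T, g = Ti, mid = (Ti j)^2` gives `ℛ⁻`;
`f = Ti, g = T, mid = (T j)^2` gives `(ℛ⁻¹)⁺`;  `f = Ti, g = T, mid = (Ti j)^2` gives `(ℛ⁻¹)⁻`. -/
def Rgen {M : Type*} [Monoid M] (f g : ℕ → M) (mid : M) (i j : ℕ) : M :=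
  if j < i then dF f (j + 1) (i - j - 1) * mid * aF g (j + 1) (i - j - 1) else 1

section OrderedProducts

variable {M : Type*} [Monoid M]

@[simp] lemma aF_zero (f : ℕ → M) (s : ℕ) : aF f s 0 = 1 := by simp [aF]

@[simp] lemma dF_zero (f : ℕ → M) (s : ℕ) : dF f s 0 = 1 := by simp [dF]

lemma aF_succ (f : ℕ → M) (s l : ℕ) : aF f s (l + 1) = f s * aF f (s + 1) l := by
  simp [aF, List.range'_succ]

lemma aF_succ_right (f : ℕ → M) (s l : ℕ) : aF f s (l + 1) = aF f s l * f (s + l) := by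
  simp [aF, List.range'_concat]

lemma dF_succ (f : ℕ → M) (s l : ℕ) : dF f s (l + 1) = dF f (s + 1) l * f s := by
  simp [dF, List.range'_succ]

lemma dF_succ_left (f : ℕ → M) (s l : ℕ) : dF f s (l + 1) = f (s + l) * dF f s l := by
  simp [dF, List.range'_concat]

lemma aF_add (f : ℕ → M) (s k l : ℕ) : aF f s (k + l) = aF f s k * aF f (s + k) l := by
  rw [aF, aF, aF, ← List.range'_append_1, List.map_append, List.prod_append]

lemma aF_inv {G : Type*} [Group G] (f : ℕ → G) (s l : ℕ) : aF f⁻¹ s l = (dF f s l)⁻¹ := by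
  simp [aF, dF, List.prod_inv_reverse, Function.comp_def, Pi.inv_def]

lemma dF_inv {G : Type*} [Group G] (f : ℕ → G) (s l : ℕ) : dF f⁻¹ s l = (aF f s l)⁻¹ := by
  simp [aF, dF, List.prod_inv_reverse, Function.comp_def, Pi.inv_def]

lemma coe_aF (f : ℕ → Mˣ) (s l : ℕ) : ((aF f s l : Mˣ) : M) = aF (fun k => (f k : M)) s l := by
  simp [aF, ← Units.coeHom_apply, map_list_prod, Function.comp_def]

lemma coe_dF (f : ℕ → Mˣ) (s l : ℕ) : ((dF f s l : Mˣ) : M) = dF (fun k => (f k : M)) s l := by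
  simp [dF, ← Units.coeHom_apply, map_list_prod, Function.comp_def]

lemma aF_congr {f g : ℕ → M} {s l : ℕ} (h : ∀ k, s ≤ k → k < s + l → f k = g k) :
    aF f s l = aF g s l := by
  simp only [aF]
  congr 1
  exact List.map_congr_left fun k hk => h k (List.mem_range'_1.1 hk).1 (List.mem_range'_1.1 hk).2

lemma dF_congr {f g : ℕ → M} {s l : ℕ} (h : ∀ k, s ≤ k → k < s + l → f k = g k) :
    dF f s l = dF g s l := by
  simp only [dF]
  congr 2
  exact List.map_congr_left fun k hk => h k (List.mem_range'_1.1 hk).1 (List.mem_range'_1.1 hk).2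

lemma semiconjBy_dF {f g : ℕ → M} {x : M} {s t l : ℕ}
    (h : ∀ k < l, SemiconjBy x (f (s + k)) (g (t + k))) :
    SemiconjBy x (dF f s l) (dF g t l) := by
  induction l with
  | zero => simp
  | succ l ih =>
    rw [dF_succ_left, dF_succ_left]
    exact (h l l.lt_succ_self).mul_right (ih fun k hk => h k (hk.trans l.lt_succ_self))

lemma commute_aF {f : ℕ → M} {x : M} {s l : ℕ}
    (h : ∀ k, s ≤ k → k < s + l → Commute x (f k)) : Commute x (aF f s l) :=
  Commute.list_prod_right _ _ fun y hy => by
    obtain ⟨k, hk, rfl⟩ := List.mem_map.1 hy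
    exact h k (List.mem_range'_1.1 hk).1 (List.mem_range'_1.1 hk).2

lemma commute_dF {f : ℕ → M} {x : M} {s l : ℕ}
    (h : ∀ k, s ≤ k → k < s + l → Commute x (f k)) : Commute x (dF f s l) :=
  Commute.list_prod_right _ _ fun y hy => by
    obtain ⟨k, hk, rfl⟩ := List.mem_map.1 (List.mem_reverse.1 hy)
    exact h k (List.mem_range'_1.1 hk).1 (List.mem_range'_1.1 hk).2

end OrderedProducts

section BraidRelations

variable {M : Type*} [Monoid M]

/-- `T 0, …, T (n - 2)` satisfy the braid relations of type `A_{n-1}`; the values of `T` at larger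
indices are irrelevant. -/
structure IsBraided (n : ℕ) (T : ℕ → M) : Prop where
  commute_of_lt : ∀ k l, k + 1 < l → l + 1 < n → Commute (T k) (T l)
  braid : ∀ k, k + 2 < n → T k * T (k + 1) * T k = T (k + 1) * T k * T (k + 1)

namespace IsBraided

variable {T : ℕ → M}

lemma map {N : Type*} [Monoid N] (hT : IsBraided n T) (φ : M →* N) : IsBraided n (φ ∘ T) where
  commute_of_lt k l hkl hl := (hT.commute_of_lt k l hkl hl).map φ
  braid k hk := by simp only [Function.comp_apply, ← map_mul, hT.braid k hk]

lemma dF_semiconjBy (hT : IsBraided n T) {s k l : ℕ} (hsk : s ≤ k) (hkl : k + 1 < s + l)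
    (hl : s + l < n) : SemiconjBy (dF T s l) (T (k + 1)) (T k) := by
  induction l with
  | zero => omega
  | succ l ih =>
    rcases (by omega : k + 1 < s + l ∨ k + 1 = s + l) with h | h
    · rw [dF_succ_left]
      exact SemiconjBy.mul_left (hT.commute_of_lt k (s + l) h hl).symm.semiconjBy
        (ih h (by omega))
    · obtain ⟨m, rfl⟩ : ∃ m, l = m + 1 := ⟨l - 1, by omega⟩
      obtain rfl : k = s + m := by omega
      have hcomm : Commute (T (s + m + 1)) (dF T s m) :=
        commute_dF fun i _ hi => (hT.commute_of_lt i (s + m + 1) (by omega) (by omega)).symm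
      rw [dF_succ_left, dF_succ_left, ← add_assoc, SemiconjBy]
      calc T (s + m + 1) * (T (s + m) * dF T s m) * T (s + m + 1)
          = T (s + m + 1) * T (s + m) * T (s + m + 1) * dF T s m := by
            simp only [mul_assoc, hcomm.eq]
        _ = T (s + m) * (T (s + m + 1) * (T (s + m) * dF T s m)) := by
            rw [← hT.braid (s + m) (by omega)]; simp only [mul_assoc]

lemma dF_mul_dF_semiconjBy (hT : IsBraided n T) {m : ℕ} (hm : m + 1 < n) :
    SemiconjBy (dF T 0 m * dF T 1 m) (T 0) (T m) := by
  have hshift : SemiconjBy (dF T 0 (m + 1)) (dF T 1 m) (dF T 0 m) :=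
    semiconjBy_dF fun k hk => by
      rw [add_comm 1, zero_add]
      exact hT.dF_semiconjBy k.zero_le (by omega) (by omega)
  calc dF T 0 m * dF T 1 m * T 0
      = dF T 0 m * dF T 0 (m + 1) := by rw [dF_succ, mul_assoc]
    _ = dF T 0 (m + 1) * dF T 1 m := hshift.eq.symm
    _ = T m * (dF T 0 m * dF T 1 m) := by rw [dF_succ_left, zero_add, mul_assoc]

end IsBraided

/-- `B 0, …, B (n - 1)` is a Jucys–Murphy type family for `T`: its last member commutes with
`T 0, …, T (n - 3)` and generates the others through `B j = T j * B (j + 1) * T j`. -/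
structure IsJucysMurphy (n : ℕ) (T B : ℕ → M) : Prop where
  eq_mul_mul : ∀ j, j + 1 < n → B j = T j * B (j + 1) * T j
  commute_last : ∀ k, k + 2 < n → Commute (T k) (B (n - 1))

namespace IsJucysMurphy

variable {T B : ℕ → M}

lemma eq_aF_mul_dF (hB : IsJucysMurphy n T B) (s : ℕ) {l : ℕ} (hl : s + l < n) :
    B s = aF T s l * B (s + l) * dF T s l := by
  induction l with
  | zero => simp
  | succ l ih =>
    rw [ih (by omega), hB.eq_mul_mul (s + l) hl, aF_succ_right, dF_succ_left]
    simp only [mul_assoc, add_assoc]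

lemma of_aF_mul_dF {b : M} (hB : ∀ i, B i = aF T i (n - 1 - i) * b * dF T i (n - 1 - i))
    (hb : ∀ k, k + 2 < n → Commute (T k) b) : IsJucysMurphy n T B where
  eq_mul_mul j hj := by
    rw [hB j, hB (j + 1), show n - 1 - j = n - 1 - (j + 1) + 1 by omega, aF_succ, dF_succ]
    simp only [mul_assoc]
  commute_last k hk := by simpa [hB] using hb k hk

lemma commute_of_lt (hB : IsJucysMurphy n T B) (hT : IsBraided n T) {k j : ℕ} (hkj : k + 1 < j)
    (hj : j ≤ n - 1) : Commute (T k) (B j) := by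
  induction hj using Nat.decreasingInduction with
  | self => exact hB.commute_last k (by omega)
  | of_succ j hj ih =>
    have hTj := hT.commute_of_lt k j hkj (by omega)
    rw [hB.eq_mul_mul j (by omega)]
    exact (hTj.mul_right (ih (by omega))).mul_right hTj

lemma commute_succ (hB : IsJucysMurphy n T B) (hT : IsBraided n T) {j : ℕ} (hj : j + 2 < n) :
    Commute (T (j + 1)) (B j) := by
  have hcomm : Commute (T j) (B (j + 2)) := hB.commute_of_lt hT (by omega) (by omega)
  rw [hB.eq_mul_mul j (by omega), hB.eq_mul_mul (j + 1) (by omega)]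
  calc T (j + 1) * (T j * (T (j + 1) * B (j + 2) * T (j + 1)) * T j)
      = (T (j + 1) * T j * T (j + 1)) * B (j + 2) * (T (j + 1) * T j) := by
        simp only [mul_assoc]
    _ = T j * T (j + 1) * (T j * B (j + 2)) * (T (j + 1) * T j) := by
        rw [← hT.braid j hj]; simp only [mul_assoc]
    _ = T j * T (j + 1) * B (j + 2) * (T j * T (j + 1) * T j) := by
        rw [hcomm.eq]; simp only [mul_assoc]
    _ = T j * (T (j + 1) * B (j + 2) * T (j + 1)) * T j * T (j + 1) := by
        rw [hT.braid j hj]; simp only [mul_assoc]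

lemma commute_of_gt (hB : IsJucysMurphy n T B) (hT : IsBraided n T) {k j : ℕ} (hjk : j + 1 ≤ k)
    (hk : k + 1 < n) : Commute (T k) (B j) := by
  obtain ⟨k, rfl⟩ : ∃ l, k = l + 1 := ⟨k - 1, by omega⟩
  induction (by omega : j ≤ k) using Nat.decreasingInduction with
  | self => exact hB.commute_succ hT hk
  | of_succ j hj ih =>
    have hTj := (hT.commute_of_lt j (k + 1) (by omega) hk).symm
    rw [hB.eq_mul_mul j (by omega)]
    exact (hTj.mul_right (ih (by omega))).mul_right hTj

lemma map {N : Type*} [Monoid N] (hB : IsJucysMurphy n T B) (φ : M →* N) :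
    IsJucysMurphy n (φ ∘ T) (φ ∘ B) where
  eq_mul_mul j hj := by simp only [Function.comp_apply, ← map_mul, ← hB.eq_mul_mul j hj]
  commute_last k hk := (hB.commute_last k hk).map φ

end IsJucysMurphy

/-- `Y` and `D` satisfy `Y (i + 1) T_i D (i + 1) = T_i D (i + 1) T_i Y (i + 1) T_i`, which for
Jucys–Murphy type families expresses how neighbouring members of `Y` and `D` commute. -/
def CrossRelated (n : ℕ) (T Y D : ℕ → M) : Prop :=
  ∀ i, i + 1 < n → Y (i + 1) * T i * D (i + 1) = T i * D (i + 1) * T i * Y (i + 1) * T i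

lemma CrossRelated.of_last {T Y D : ℕ → M} (hT : IsBraided n T) (hY : IsJucysMurphy n T Y)
    (hD : IsJucysMurphy n T D)
    (hlast : ∀ m, m + 2 = n →
      Y (m + 1) * T m * D (m + 1) = T m * D (m + 1) * T m * Y (m + 1) * T m) :
    CrossRelated n T Y D := by
  intro i hi
  induction (by omega : i ≤ n - 2) using Nat.decreasingInduction with
  | self => exact hlast _ (by omega)
  | of_succ i hi' ih =>
    have hbraid := hT.braid i (by omega)
    have hYcomm : Commute (T i) (Y (i + 2)) := hY.commute_of_lt hT (by omega) (by omega)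
    have hDcomm : Commute (T i) (D (i + 2)) := hD.commute_of_lt hT (by omega) (by omega)
    have hcross : Y (i + 2) * T (i + 1) * D (i + 2)
        = T (i + 1) * D (i + 2) * T (i + 1) * Y (i + 2) * T (i + 1) := ih (by omega)
    rw [hY.eq_mul_mul (i + 1) (by omega), hD.eq_mul_mul (i + 1) (by omega)]
    simp only [add_assoc, Nat.reduceAdd]
    generalize T i = s, T (i + 1) = t, Y (i + 2) = y, D (i + 2) = d at *
    calc t * y * t * s * (t * d * t)
        = t * y * (t * s * t) * d * t := by simp only [mul_assoc]
      _ = t * (y * s) * t * (s * d) * t := by rw [← hbraid]; simp only [mul_assoc]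
      _ = t * s * (y * t * d) * s * t := by rw [← hYcomm.eq, hDcomm.eq]; simp only [mul_assoc]
      _ = (t * s * t) * d * t * y * (t * s * t) := by rw [hcross]; simp only [mul_assoc]
      _ = s * t * (s * d) * t * (y * s) * t * s := by rw [← hbraid]; simp only [mul_assoc]
      _ = s * t * d * (s * t * s) * y * t * s := by
        rw [hDcomm.eq, ← hYcomm.eq]; simp only [mul_assoc]
      _ = s * (t * d * t) * s * (t * y * t) * s := by rw [hbraid]; simp only [mul_assoc]

section Invertible

variable {T : ℕ → Mˣ} {Y D : ℕ → M}

lemma CrossRelated.mul_eq_of_lt (hT : IsBraided n fun k => (T k : M))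
    (hY : IsJucysMurphy n (fun k => (T k : M)) Y) (hD : IsJucysMurphy n (fun k => (T k : M)) D)
    (hYD : CrossRelated n (fun k => (T k : M)) Y D) {i j : ℕ} (hij : i < j) (hj : j < n) :
    Y i * D j = ↑(Rgen T⁻¹ T (T i ^ 2) j i) * D j * Y i := by
  set A := aF T (i + 1) (j - i - 1)
  set A' := dF T (i + 1) (j - i - 1)
  have hYT (k : ℕ) (hik : i + 1 ≤ k) (hkj : k < i + 1 + (j - i - 1)) :
      Commute (Y i) (T k) := (hY.commute_of_gt hT hik (by omega)).symm
  have hYA : Commute (Y i) A := by rw [coe_aF]; exact commute_aF hYT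
  have hYA' : Commute (Y i) A' := by rw [coe_dF]; exact commute_dF hYT
  have hDj : D (i + 1) = A * D j * A' := by
    rw [coe_aF, coe_dF, hD.eq_aF_mul_dF (i + 1) (l := j - i - 1) (by omega),
      show i + 1 + (j - i - 1) = j by omega]
  have hnext : Y i * D (i + 1) = T i ^ 2 * D (i + 1) * Y i := by
    have := hYD i (by omega)
    rw [hY.eq_mul_mul i (by omega), sq]
    simp only [mul_assoc] at this ⊢
    rw [this]
  have hconj : Rgen T⁻¹ T (T i ^ 2) j i = A⁻¹ * T i ^ 2 * A := by
    rw [Rgen, if_pos hij, dF_inv]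
  have hcancel : A * (Y i * D j) * A' = T i ^ 2 * (A * D j * Y i) * A' := by
    calc A * (Y i * D j) * A' = Y i * (A * D j * A') := by
          simp only [← mul_assoc, hYA.eq]
      _ = T i ^ 2 * (A * D j * A') * Y i := by rw [← hDj, hnext]
      _ = T i ^ 2 * (A * D j * Y i) * A' := by simp only [mul_assoc, hYA'.eq]
  rw [hconj, ← A.mul_right_inj, ← A'.mul_left_inj, hcancel]
  simp [mul_assoc]

lemma CrossRelated.mul_eq_of_gt (hT : IsBraided n fun k => (T k : M))
    (hY : IsJucysMurphy n (fun k => (T k : M)) Y) (hD : IsJucysMurphy n (fun k => (T k : M)) D)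
    (hYD : CrossRelated n (fun k => (T k : M)) Y D) {i j : ℕ} (hji : j < i) (hi : i < n) :
    Y i * D j = D j * Y i * ↑(Rgen T T⁻¹ (T j ^ 2) i j) := by
  set A := aF T (j + 1) (i - j - 1)
  set A' := dF T (j + 1) (i - j - 1)
  have hDT (k : ℕ) (hjk : j + 1 ≤ k) (hki : k < j + 1 + (i - j - 1)) :
      Commute (D j) (T k) := (hD.commute_of_gt hT hjk (by omega)).symm
  have hDA : Commute (D j) A := by rw [coe_aF]; exact commute_aF hDT
  have hDA' : Commute (D j) A' := by rw [coe_dF]; exact commute_dF hDT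
  have hYi : Y (j + 1) = A * Y i * A' := by
    rw [coe_aF, coe_dF, hY.eq_aF_mul_dF (j + 1) (l := i - j - 1) (by omega),
      show j + 1 + (i - j - 1) = i by omega]
  have hnext : Y (j + 1) * D j = D j * Y (j + 1) * T j ^ 2 := by
    have := hYD j (by omega)
    rw [hD.eq_mul_mul j (by omega), sq]
    simp only [← mul_assoc] at this ⊢
    rw [this]
  have hconj : Rgen T T⁻¹ (T j ^ 2) i j = A' * T j ^ 2 * A'⁻¹ := by
    rw [Rgen, if_pos hji, aF_inv]
  have hcancel : A * (Y i * D j) * A' = A * (D j * Y i * A' * T j ^ 2) := by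
    calc A * (Y i * D j) * A' = A * Y i * A' * D j := by simp only [mul_assoc, hDA'.eq]
      _ = D j * (A * Y i * A') * T j ^ 2 := by rw [← hYi, hnext]
      _ = A * (D j * Y i * A' * T j ^ 2) := by simp only [← mul_assoc, hDA.eq]
  rw [hconj, ← A.mul_right_inj, ← A'.mul_left_inj, hcancel]
  simp [mul_assoc]

theorem CrossRelated.mul_eq_of_ne (hT : IsBraided n fun k => (T k : M))
    (hY : IsJucysMurphy n (fun k => (T k : M)) Y) (hD : IsJucysMurphy n (fun k => (T k : M)) D)
    (hYD : CrossRelated n (fun k => (T k : M)) Y D) {i j : ℕ} (hi : i < n) (hj : j < n)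
    (hij : i ≠ j) :
    Y i * D j
      = ↑(Rgen T⁻¹ T (T i ^ 2) j i) * D j * Y i * ↑(Rgen T T⁻¹ (T j ^ 2) i j) := by
  rcases hij.lt_or_gt with h | h
  · rw [hYD.mul_eq_of_lt hT hY hD h hj]
    simp [Rgen, h.not_gt]
  · rw [hYD.mul_eq_of_gt hT hY hD h hi]
    simp [Rgen, h.not_gt]

end Invertible

end BraidRelations

section DoubleAffineBraid

variable {M : Type*} [Ring M] [Algebra R M]

/-- The relations of the double affine braid group of type `GL_n` that are needed here, with `P` in
the role of `π⁻¹` and `E i` in the role of `X_i⁻¹`. -/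
structure IsDoubleAffineBraid (n : ℕ) (q : Rˣ) (T : ℕ → Mˣ) (P : Mˣ) (E : ℕ → M) : Prop where
  isBraided : IsBraided n T
  isJucysMurphy : IsJucysMurphy n (fun k => (T k : M)) E
  mul_P : ∀ k, k + 2 < n → T k * P = P * T (k + 1)
  mul_P_sq : ∀ m, m + 2 = n → T m * P ^ 2 = P ^ 2 * T 0
  P_mul_succ : ∀ k, k + 1 < n → (P : M) * E (k + 1) = E k * P
  P_mul_zero : (P : M) * E 0 = (↑q⁻¹ : R) • (E (n - 1) * P)

/-- The Cherednik operator `Y_i = T_i ⋯ T_{n-1} P T_1⁻¹ ⋯ T_{i-1}⁻¹`, with `P` in the role of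
`π⁻¹`. -/
def cherednikY {G : Type*} [Group G] (n : ℕ) (T : ℕ → G) (P : G) (i : ℕ) : G :=
  aF T i (n - 1 - i) * P * aF T⁻¹ 0 i

/-- The `q`-Dunkl operator `D_i = T_i ⋯ T_{n-1} (c X_n⁻¹ (Y_n - Y_n⁻¹)) T_{n-1} ⋯ T_i`, with
`E (n - 1)` in the role of `X_n⁻¹` and an arbitrary scalar `c` in the role of `(q - q⁻¹)⁻¹`. -/
def dunklD (n : ℕ) (c : R) (T : ℕ → Mˣ) (P : Mˣ) (E : ℕ → M) (i : ℕ) : M :=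
  aF T i (n - 1 - i)
    * c • (E (n - 1) * (cherednikY n T P (n - 1) - ↑(cherednikY n T P (n - 1))⁻¹))
    * dF T i (n - 1 - i)

lemma cherednikY_last {G : Type*} [Group G] (n : ℕ) (T : ℕ → G) (P : G) :
    cherednikY n T P (n - 1) = P * (dF T 0 (n - 1))⁻¹ := by
  simp [cherednikY, aF_inv]

lemma dunklD_last (n : ℕ) (c : R) (T : ℕ → Mˣ) (P : Mˣ) (E : ℕ → M) :
    dunklD n c T P E (n - 1)
      = c • (E (n - 1) * (cherednikY n T P (n - 1) - ↑(cherednikY n T P (n - 1))⁻¹)) := by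
  simp [dunklD]

lemma cherednikY_last_mul {G : Type*} [Group G] (T : ℕ → G) (P : G) {m : ℕ} (hm : m + 2 = n) :
    cherednikY n T P (m + 1) * T m = P * (dF T 0 m)⁻¹ := by
  have hy : cherednikY n T P (m + 1) = P * (dF T 0 (m + 1))⁻¹ := by
    simpa only [show n - 1 = m + 1 by omega] using cherednikY_last n T P
  rw [hy, dF_succ_left, zero_add, mul_inv_rev, mul_assoc, inv_mul_cancel_right]

namespace IsDoubleAffineBraid

variable {q : Rˣ} {T : ℕ → Mˣ} {P : Mˣ} {E : ℕ → M}

lemma isBraided_coe (h : IsDoubleAffineBraid n q T P E) : IsBraided n fun k => (T k : M) :=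
  h.isBraided.map (Units.coeHom M)

lemma isJucysMurphy_cherednikY (h : IsDoubleAffineBraid n q T P E) :
    IsJucysMurphy n T (cherednikY n T P) where
  eq_mul_mul j hj := by
    rw [cherednikY, cherednikY, show n - 1 - j = n - 1 - (j + 1) + 1 by omega, aF_succ,
      aF_succ_right, zero_add]
    simp [mul_assoc]
  commute_last k hk := by
    rw [cherednikY_last]
    have hdF : SemiconjBy (dF T 0 (n - 1))⁻¹ (T k) (T (k + 1)) :=
      (h.isBraided.dF_semiconjBy k.zero_le (by omega) (by omega)).inv_symm_left
    have hP : SemiconjBy P (T (k + 1)) (T k) := (h.mul_P k hk).symm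
    exact (hP.mul_left hdF).symm

lemma commute_cherednikY_last (h : IsDoubleAffineBraid n q T P E) {m : ℕ} (hm : m + 2 = n) :
    Commute (cherednikY n T P (m + 1)) (T m * cherednikY n T P (m + 1) * T m) := by
  set y := cherednikY n T P (m + 1)
  set ε := dF T 0 m
  set ε' := dF T 1 m
  have hshift : SemiconjBy P ε' ε := semiconjBy_dF fun k hk => by
    rw [add_comm 1, zero_add]
    exact (h.mul_P k (by omega)).symm
  have hzz : (y * T m) * (y * T m) = P ^ 2 * (ε * ε')⁻¹ := by
    rw [cherednikY_last_mul T P hm, mul_assoc, ← mul_assoc ε⁻¹, ← hshift.inv_right.eq]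
    simp only [sq, mul_inv_rev, mul_assoc, ε]
  have hcomm : Commute (T m) ((y * T m) * (y * T m)) := by
    rw [hzz]
    have hP : SemiconjBy (P ^ 2) (T 0) (T m) := (h.mul_P_sq m hm).symm
    exact (hP.mul_left (h.isBraided.dF_mul_dF_semiconjBy (by omega)).inv_symm_left).symm
  have := hcomm.eq
  simp only [← mul_assoc] at this
  rw [commute_iff_eq]
  simpa only [← mul_assoc, mul_left_inj] using this.symm

lemma P_mul_aF_mul_last (h : IsDoubleAffineBraid n q T P E) (hn : 0 < n) :
    (P : M) * ↑(aF T 0 (n - 1)) * E (n - 1)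
      = (↑q⁻¹ : R) • (E (n - 1) * ↑(cherednikY n T P (n - 1))) := by
  have hE : E 0 = ↑(aF T 0 (n - 1)) * E (n - 1) * ↑(dF T 0 (n - 1)) := by
    simpa only [coe_aF, coe_dF, zero_add] using
      h.isJucysMurphy.eq_aF_mul_dF 0 (l := n - 1) (by omega)
  calc (P : M) * ↑(aF T 0 (n - 1)) * E (n - 1)
      = P * E 0 * ↑(dF T 0 (n - 1))⁻¹ := by simp only [hE, mul_assoc, Units.mul_inv, mul_one]
    _ = (↑q⁻¹ : R) • (E (n - 1) * ↑(cherednikY n T P (n - 1))) := by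
      rw [h.P_mul_zero, cherednikY_last, smul_mul_assoc, mul_assoc, Units.val_mul]

lemma isJucysMurphy_dunklD (h : IsDoubleAffineBraid n q T P E) (c : R) :
    IsJucysMurphy n (fun k => (T k : M)) (dunklD n c T P E) := by
  refine .of_aF_mul_dF (fun i => by rw [dunklD, coe_aF, coe_dF]) fun k hk => ?_
  have hy : Commute (T k : M) ↑(cherednikY n T P (n - 1)) :=
    (h.isJucysMurphy_cherednikY.commute_last k hk).units_val
  exact ((h.isJucysMurphy.commute_last k hk).mul_right
    (hy.sub_right hy.units_inv_right)).smul_right c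

lemma cherednikY_last_mul_mul_last (h : IsDoubleAffineBraid n q T P E) {m : ℕ}
    (hm : m + 2 = n) :
    ((cherednikY n T P (m + 1) : Mˣ) : M) * T m * E (m + 1)
      = T m * E (m + 1) * T m * cherednikY n T P (m + 1) * T m := by
  set ε := dF T 0 m
  have hy : ((cherednikY n T P (m + 1) : Mˣ) : M) * T m = P * ↑ε⁻¹ :=
    mod_cast cherednikY_last_mul T P hm
  have hεE : Commute (E (m + 1)) ↑ε := by
    rw [coe_dF]
    exact commute_dF fun k _ hk =>
      (h.isJucysMurphy.commute_of_lt h.isBraided_coe (by omega) (by omega)).symm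
  calc ((cherednikY n T P (m + 1) : Mˣ) : M) * T m * E (m + 1)
      = P * E (m + 1) * ↑ε⁻¹ := by rw [hy, mul_assoc, ← hεE.units_inv_right.eq, mul_assoc]
    _ = E m * (P * ↑ε⁻¹) := by rw [h.P_mul_succ m (by omega), mul_assoc]
    _ = _ := by rw [← hy, h.isJucysMurphy.eq_mul_mul m (by omega)]; simp only [mul_assoc]

lemma crossRelated (h : IsDoubleAffineBraid n q T P E) (c : R) :
    CrossRelated n (fun k => (T k : M)) (fun i => ↑(cherednikY n T P i)) (dunklD n c T P E) := by
  refine .of_last h.isBraided_coe (h.isJucysMurphy_cherednikY.map (Units.coeHom M))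
    (h.isJucysMurphy_dunklD c) fun m hm => ?_
  have hlast := dunklD_last n c T P E
  rw [show n - 1 = m + 1 by omega] at hlast
  have hcomm := (h.commute_cherednikY_last hm).units_val
  have hE := h.cherednikY_last_mul_mul_last hm
  rw [hlast]
  set y := cherednikY n T P (m + 1)
  have hsub : Commute ((T m * y * T m : Mˣ) : M) (y - ↑y⁻¹) :=
    hcomm.symm.sub_right hcomm.symm.units_inv_right
  calc (y : M) * T m * c • (E (m + 1) * (y - ↑y⁻¹))
      = c • (y * T m * E (m + 1) * (y - ↑y⁻¹)) := by
        rw [mul_smul_comm]; simp only [mul_assoc]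
    _ = c • (T m * E (m + 1) * (↑(T m * y * T m) * (y - ↑y⁻¹))) := by
        rw [hE]; simp only [Units.val_mul, mul_assoc]
    _ = T m * c • (E (m + 1) * (y - ↑y⁻¹)) * T m * y * T m := by
        rw [hsub.eq]
        simp only [Units.val_mul, mul_assoc, mul_smul_comm, smul_mul_assoc]

theorem cherednikY_mul_dunklD_of_ne (h : IsDoubleAffineBraid n q T P E) (c : R) {i j : ℕ}
    (hi : i < n) (hj : j < n) (hij : i ≠ j) :
    ((cherednikY n T P i : Mˣ) : M) * dunklD n c T P E j
      = ↑(Rgen T⁻¹ T (T i ^ 2) j i) * dunklD n c T P E j * cherednikY n T P i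
        * ↑(Rgen T T⁻¹ (T j ^ 2) i j) :=
  (h.crossRelated c).mul_eq_of_ne h.isBraided_coe
    (h.isJucysMurphy_cherednikY.map (Units.coeHom M)) (h.isJucysMurphy_dunklD c) hi hj hij

lemma P_mul_aF_mul_dunklD_last (h : IsDoubleAffineBraid n q T P E) (hn : 0 < n) (c : R) :
    (P : M) * ↑(aF T 0 (n - 1)) * dunklD n c T P E (n - 1)
      = (↑q⁻¹ : R) • (dunklD n c T P E (n - 1) * ↑(cherednikY n T P (n - 1))) := by
  rw [dunklD_last]
  set y := cherednikY n T P (n - 1)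
  rw [mul_smul_comm, ← mul_assoc, h.P_mul_aF_mul_last hn, smul_mul_assoc, smul_comm,
    smul_mul_assoc]
  simp [mul_assoc, mul_sub, sub_mul, y]

theorem cherednikY_mul_dF_mul_aF_mul_dunklD (h : IsDoubleAffineBraid n q T P E) (c : R) {l : ℕ}
    (hl : l < n) :
    ((cherednikY n T P l : Mˣ) : M) * ↑(dF T 0 l) * ↑(aF T 0 l) * dunklD n c T P E l
      = (↑q⁻¹ : R) • (dunklD n c T P E l * ↑(aF T⁻¹ l (n - 1 - l)) * ↑(dF T⁻¹ l (n - 1 - l))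
        * ↑(cherednikY n T P l)) := by
  set a := aF T l (n - 1 - l)
  set d := dF T l (n - 1 - l)
  set D := dunklD n c T P E (n - 1)
  set y := cherednikY n T P (n - 1)
  have hD : dunklD n c T P E l = a * D * d := by simp only [a, d, D, dunklD_last, dunklD]
  have hY : cherednikY n T P l = a * y * d := by
    simpa only [show l + (n - 1 - l) = n - 1 by omega] using
      h.isJucysMurphy_cherednikY.eq_aF_mul_dF l (l := n - 1 - l) (by omega)
  have hYδ : cherednikY n T P l * dF T 0 l = a * P := by
    rw [cherednikY, aF_inv, inv_mul_cancel_right]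
  have hα : aF T 0 l * a = aF T 0 (n - 1) := by
    rw [show n - 1 = l + (n - 1 - l) by omega, aF_add, zero_add]
  calc ((cherednikY n T P l : Mˣ) : M) * ↑(dF T 0 l) * ↑(aF T 0 l) * dunklD n c T P E l
      = a * (P * ↑(aF T 0 (n - 1)) * D) * d := by
        rw [← Units.val_mul, hYδ, hD, ← hα]
        simp only [Units.val_mul, mul_assoc]
    _ = (↑q⁻¹ : R) • (a * D * y * d) := by
        rw [h.P_mul_aF_mul_dunklD_last (by omega)]
        simp only [mul_smul_comm, smul_mul_assoc, mul_assoc, D, y]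
    _ = _ := by
        rw [aF_inv, dF_inv, hD, hY]
        simp [mul_assoc, a, d]

end IsDoubleAffineBraid

end DoubleAffineBraid

section LaurentPolynomials

lemma mono_mul_mono (a b : Fin n →₀ ℤ) (c d : R) : mono a c * mono b d = mono (a + b) (c * d) :=
  AddMonoidAlgebra.single_mul_single ..

lemma Xel_mul_XinvEl (i : Fin n) : (Xel i * XinvEl i : Laur R n) = 1 := by
  rw [Xel, XinvEl, mono_mul_mono, ← Finsupp.single_add]
  simp [mono, AddMonoidAlgebra.one_def]

lemma linearMap_ext_mono {N : Type*} [AddCommMonoid N] [Module R N] {f g : Laur R n →ₗ[R] N}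
    (h : ∀ a c, f (mono a c) = g (mono a c)) : f = g :=
  AddMonoidAlgebra.lhom_ext' fun a => LinearMap.ext (h a)

lemma algEquiv_ext_mono {f g : Laur R n ≃ₐ[R] Laur R n}
    (h : ∀ a c, f (mono a c) = g (mono a c)) : f = g :=
  AlgEquiv.toLinearMap_injective (linearMap_ext_mono h)

/-- The action of the symmetric group on Laurent polynomials by permuting the variables. -/
def permute : Equiv.Perm (Fin n) →* (Laur R n ≃ₐ[R] Laur R n) where
  toFun w := AddMonoidAlgebra.domCongr R R (Finsupp.domCongr w)
  map_one' := algEquiv_ext_mono fun a c => by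
    simp [mono, show Finsupp.equivMapDomain 1 a = a from Finsupp.equivMapDomain_refl a]
  map_mul' v w := algEquiv_ext_mono fun a c => by
    simp [mono, show Finsupp.equivMapDomain (v * w) a = _ from Finsupp.equivMapDomain_trans w v a]

@[simp] lemma permute_mono (w : Equiv.Perm (Fin n)) (a : Fin n →₀ ℤ) (c : R) :
    permute w (mono a c) = mono (Finsupp.equivMapDomain w a) c :=
  AddMonoidAlgebra.domCongr_single ..

lemma eq_permute_of_map_mono {w : Equiv.Perm (Fin n)} {f : Module.End R (Laur R n)}
    (hf : ∀ a c, f (mono a c) = mono (Finsupp.equivMapDomain w a) c) :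
    f = (permute w).toLinearMap :=
  linearMap_ext_mono fun a c => (hf a c).trans (permute_mono w a c).symm

@[simp] lemma permute_Xel (w : Equiv.Perm (Fin n)) (i : Fin n) :
    permute w (Xel i : Laur R n) = Xel (w i) := by
  rw [Xel, permute_mono, Finsupp.equivMapDomain_single, Xel]

/-- The automorphism `X^a ↦ q^{a_i} X^a` of the ring of Laurent polynomials. -/
def scaleVar (q : Rˣ) (i : Fin n) : Laur R n ≃ₐ[R] Laur R n :=
  let scale (q : Rˣ) : Laur R n →ₐ[R] Laur R n := AddMonoidAlgebra.lift R _ _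
    { toFun a := mono a.toAdd ↑(q ^ a.toAdd i)
      map_one' := by simp [mono, AddMonoidAlgebra.one_def]
      map_mul' a b := by simp [mono_mul_mono, zpow_add] }
  have scale_mono (q : Rˣ) (a : Fin n →₀ ℤ) (c : R) :
      scale q (mono a c) = mono a (c * ↑(q ^ a i)) := by
    simp [scale, mono, AddMonoidAlgebra.lift_single]
  have scale_scale (q : Rˣ) : (scale q).comp (scale q⁻¹) = .id R _ :=
    AlgHom.toLinearMap_injective <| linearMap_ext_mono fun a c => by
      simp [scale_mono, mul_assoc]
  .ofAlgHom (scale q) (scale q⁻¹) (scale_scale q) (by simpa using scale_scale q⁻¹)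

@[simp] lemma scaleVar_mono (q : Rˣ) (i : Fin n) (a : Fin n →₀ ℤ) (c : R) :
    scaleVar q i (mono a c) = (↑(q ^ a i) : R) • mono a c := by
  simp [scaleVar, mono, AddMonoidAlgebra.lift_single, mul_comm]

lemma eq_zero_of_add_right_invariant {G N : Type*} [AddGroup G] [IsAddTorsionFree G] [Zero N]
    {f : G →₀ N} {v : G} (hv : v ≠ 0) (hf : ∀ a, f (a + v) = f a) : f = 0 := by
  have hf_nsmul (a : G) (k : ℕ) : f (a + k • v) = f a := by
    induction k with
    | zero => simp
    | succ k ih => rw [succ_nsmul, ← add_assoc, hf, ih]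
  have hinj (a : G) : Function.Injective fun k : ℕ => a + k • v :=
    (add_right_injective a).comp
      (injective_nsmul_iff_not_isOfFinAddOrder.2 (not_isOfFinAddOrder_of_isAddTorsionFree hv))
  by_contra hf_ne
  obtain ⟨a, ha⟩ := DFunLike.ne_iff.1 hf_ne
  refine Set.infinite_of_injective_forall_mem (hinj a) (fun k => ?_) f.hasFiniteSupport
  simpa only [Function.mem_support, hf_nsmul, Finsupp.zero_apply] using ha

lemma isLeftRegular_Xel_sub_Xel {i j : Fin n} (hij : i ≠ j) :
    IsLeftRegular (Xel j - Xel i : Laur R n) := by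
  refine isLeftRegular_of_non_zero_divisor _ fun p hp => ?_
  set v : Fin n →₀ ℤ := Finsupp.single j 1 - Finsupp.single i 1
  have hv : v ≠ 0 := fun h => hij <|
    (Finsupp.single_left_injective one_ne_zero (sub_eq_zero.1 h)).symm
  have hshift (a : Fin n →₀ ℤ) : p.coeff (a + v) = p.coeff a := by
    have hcoeff := congrArg (fun f => f.coeff (a + Finsupp.single j 1)) hp
    simp only [sub_mul, Xel, mono, AddMonoidAlgebra.coeff_sub, Finsupp.sub_apply,
      AddMonoidAlgebra.coeff_single_mul_apply, one_mul, AddMonoidAlgebra.coeff_zero,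
      Finsupp.zero_apply, sub_eq_zero, neg_add_cancel_comm_assoc] at hcoeff
    rw [hcoeff]
    congr 1
    simp only [v]
    abel
  exact AddMonoidAlgebra.coeff_injective (eq_zero_of_add_right_invariant hv hshift)

lemma eq_zero_of_map_Xel_mul {A : Type*} [Semiring A] [Algebra R A] {U : Laur R n →ₗ[R] A}
    (χ : Laur R n →ₐ[R] A) (hU : ∀ i p, U (Xel i * p) = χ (Xel i) * U p) (hU_one : U 1 = 0) :
    U = 0 := by
  have mono_zero : (mono 0 1 : Laur R n) = 1 := AddMonoidAlgebra.one_def.symm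
  have mono_add (a b : Fin n →₀ ℤ) : (mono (a + b) 1 : Laur R n) = mono a 1 * mono b 1 := by
    rw [mono_mul_mono, one_mul]
  let H : AddSubgroup (Fin n →₀ ℤ) :=
    { carrier := {a | ∀ p, U (mono a 1 * p) = χ (mono a 1) * U p}
      zero_mem' := fun p => by simp [mono_zero]
      add_mem' := fun {a b} ha hb p => by
        rw [mono_add, mul_assoc, ha, hb, map_mul, mul_assoc]
      neg_mem' := fun {a} ha p => by
        have hinv : (mono (-a) 1 * mono a 1 : Laur R n) = 1 := by
          rw [← mono_add, neg_add_cancel, mono_zero]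
        calc U (mono (-a) 1 * p)
            = χ (mono (-a) 1 * mono a 1) * U (mono (-a) 1 * p) := by
              rw [hinv, map_one, one_mul]
          _ = χ (mono (-a) 1) * U (mono (-a) 1 * mono a 1 * p) := by
              rw [map_mul, mul_assoc, ← ha, ← mul_assoc, mul_comm (mono a 1)]
          _ = χ (mono (-a) 1) * U p := by rw [hinv, one_mul] }
  have mem_H (a : Fin n →₀ ℤ) : a ∈ H := by
    induction a using Finsupp.induction_linear with
    | zero => exact zero_mem H
    | add a b ha hb => exact add_mem ha hb
    | single i z =>
      have hi : Finsupp.single i 1 ∈ H := hU i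
      simpa using zsmul_mem hi z
  refine linearMap_ext_mono fun a c => ?_
  have hmono : (mono a c : Laur R n) = c • (mono a 1 * 1) := by simp [mono]
  rw [hmono, map_smul, mem_H a, hU_one, mul_zero, smul_zero, LinearMap.zero_apply]

/-- The operator `π⁻¹`, as an automorphism of the ring of Laurent polynomials. -/
def cyclicShift (n : ℕ) [NeZero n] (q : Rˣ) : Laur R n ≃ₐ[R] Laur R n :=
  permute (finRotate n)⁻¹ * scaleVar q 0

/-- An automorphism of the ring of Laurent polynomials as an invertible operator. -/
def autUnit : (Laur R n ≃ₐ[R] Laur R n) →* (Module.End R (Laur R n))ˣ :=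
  (DistribMulAction.toModuleEnd R (Laur R n)).toHomUnits

@[simp] lemma autUnit_apply (φ : Laur R n ≃ₐ[R] Laur R n) (p : Laur R n) :
    (autUnit φ : Module.End R (Laur R n)) p = φ p := rfl

end LaurentPolynomials

section DemazureLusztig

/-- `T` is the Demazure–Lusztig operator of the transposition `(i j)` with Hecke eigenvalues `a`
and `-b`, characterised by its commutation with the variables and its value at `1`. -/
structure IsDemazureLusztig (a b : R) (i j : Fin n) (T : Module.End R (Laur R n)) : Prop where
  map_one : T 1 = a • 1
  map_left_mul : ∀ p, T (Xel i * p) = Xel j * T p - (a - b) • (Xel j * p)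
  map_right_mul : ∀ p, T (Xel j * p) = Xel i * T p + (a - b) • (Xel j * p)
  map_mul_of_ne : ∀ l, l ≠ i → l ≠ j → ∀ p, T (Xel l * p) = Xel l * T p

namespace IsDemazureLusztig

variable {a b : R} {i j k l : Fin n} {S T : Module.End R (Laur R n)}

lemma of_mul_eq (hij : i ≠ j)
    (hT : ∀ p, (Xel j - Xel i) * T p
      = (b • Xel j - a • Xel i) * permute (Equiv.swap i j) p + (a - b) • (Xel j * p)) :
    IsDemazureLusztig a b i j T := by
  simp only [Algebra.smul_def, map_sub] at hT
  constructor
  case map_one =>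
    refine isLeftRegular_Xel_sub_Xel hij ?_
    simp only [hT, _root_.map_one, Algebra.smul_def]
    ring
  case map_left_mul =>
    refine fun p => isLeftRegular_Xel_sub_Xel hij ?_
    simp only [hT, map_mul, permute_Xel, Equiv.swap_apply_left, Algebra.smul_def, map_sub]
    linear_combination (-Xel j) * hT p
  case map_right_mul =>
    refine fun p => isLeftRegular_Xel_sub_Xel hij ?_
    simp only [hT, map_mul, permute_Xel, Equiv.swap_apply_right, Algebra.smul_def, map_sub]
    linear_combination (-Xel i) * hT p
  case map_mul_of_ne =>
    refine fun l hli hlj p => isLeftRegular_Xel_sub_Xel hij ?_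
    simp only [hT, map_mul, permute_Xel, Equiv.swap_apply_of_ne_of_ne hli hlj]
    linear_combination (-Xel l) * hT p

lemma mul_self (hT : IsDemazureLusztig a b i j T) : T * T = (a - b) • T + (a * b) • 1 := by
  refine sub_eq_zero.1 (eq_zero_of_map_Xel_mul (.id R _) (fun l p => ?_) ?_)
  · rcases eq_or_ne l i with rfl | hli
    · simp only [LinearMap.sub_apply, LinearMap.add_apply, LinearMap.smul_apply,
        Module.End.mul_apply, Module.End.one_apply, AlgHom.coe_id, id, map_sub, map_smul,
        hT.map_left_mul, hT.map_right_mul]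
      algebra
    rcases eq_or_ne l j with rfl | hlj
    · simp only [LinearMap.sub_apply, LinearMap.add_apply, LinearMap.smul_apply,
        Module.End.mul_apply, Module.End.one_apply, AlgHom.coe_id, id, map_add, map_smul,
        hT.map_left_mul, hT.map_right_mul]
      algebra
    · simp only [LinearMap.sub_apply, LinearMap.add_apply, LinearMap.smul_apply,
        Module.End.mul_apply, Module.End.one_apply, AlgHom.coe_id, id,
        hT.map_mul_of_ne l hli hlj, mul_sub, mul_add, mul_smul_comm]
  · simp only [LinearMap.sub_apply, LinearMap.add_apply, LinearMap.smul_apply,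
      Module.End.mul_apply, Module.End.one_apply, map_smul, hT.map_one, smul_smul, ← add_smul,
      ← sub_smul]
    rw [show a * a - ((a - b) * a + a * b) = 0 by ring, zero_smul]

lemma commute (hS : IsDemazureLusztig a b i j S) (hT : IsDemazureLusztig a b k l T)
    (hik : i ≠ k) (hil : i ≠ l) (hjk : j ≠ k) (hjl : j ≠ l) : Commute S T := by
  refine sub_eq_zero.1
    (eq_zero_of_map_Xel_mul (permute (Equiv.swap i j * Equiv.swap k l)).toAlgHom ?_ ?_)
  · intro m p
    simp only [LinearMap.sub_apply, Module.End.mul_apply, AlgEquiv.toAlgHom_apply, permute_Xel,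
      Equiv.Perm.mul_apply]
    have hSk := hS.map_mul_of_ne k hik.symm hjk.symm
    have hSl := hS.map_mul_of_ne l hil.symm hjl.symm
    have hTi := hT.map_mul_of_ne i hik hil
    have hTj := hT.map_mul_of_ne j hjk hjl
    rcases eq_or_ne m i with rfl | hmi
    · rw [Equiv.swap_apply_of_ne_of_ne hik hil, Equiv.swap_apply_left]
      simp only [hS.map_left_mul, hTi, hTj, map_sub, map_smul]
      algebra
    rcases eq_or_ne m j with rfl | hmj
    · rw [Equiv.swap_apply_of_ne_of_ne hjk hjl, Equiv.swap_apply_right]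
      simp only [hS.map_right_mul, hTi, hTj, map_add, map_smul]
      algebra
    rcases eq_or_ne m k with rfl | hmk
    · rw [Equiv.swap_apply_left, Equiv.swap_apply_of_ne_of_ne hil.symm hjl.symm]
      simp only [hT.map_left_mul, hSk, hSl, map_sub, map_smul]
      algebra
    rcases eq_or_ne m l with rfl | hml
    · rw [Equiv.swap_apply_right, Equiv.swap_apply_of_ne_of_ne hik.symm hjk.symm]
      simp only [hT.map_right_mul, hSk, hSl, map_add, map_smul]
      algebra
    · rw [Equiv.swap_apply_of_ne_of_ne hmk hml, Equiv.swap_apply_of_ne_of_ne hmi hmj,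
        hT.map_mul_of_ne m hmk hml, hS.map_mul_of_ne m hmi hmj, hS.map_mul_of_ne m hmi hmj,
        hT.map_mul_of_ne m hmk hml, mul_sub]
  · simp only [LinearMap.sub_apply, Module.End.mul_apply, map_smul, hS.map_one, hT.map_one,
      sub_self]

lemma braid (hij : i ≠ j) (hik : i ≠ k) (hjk : j ≠ k) (hS : IsDemazureLusztig a b i j S)
    (hT : IsDemazureLusztig a b j k T) : S * T * S = T * S * T := by
  refine sub_eq_zero.1 (eq_zero_of_map_Xel_mul (permute (Equiv.swap i k)).toAlgHom ?_ ?_)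
  · intro l p
    have hSS (r : Laur R n) : S (S r) = (a - b) • S r + (a * b) • r :=
      LinearMap.congr_fun hS.mul_self r
    have hTT (r : Laur R n) : T (T r) = (a - b) • T r + (a * b) • r :=
      LinearMap.congr_fun hT.mul_self r
    have hSz := hS.map_mul_of_ne k hik.symm hjk.symm
    have hTx := hT.map_mul_of_ne i hij hik
    simp only [LinearMap.sub_apply, Module.End.mul_apply, AlgEquiv.toAlgHom_apply, permute_Xel]
    rcases eq_or_ne l i with rfl | hli
    · simp only [Equiv.swap_apply_left, hS.map_left_mul, hT.map_left_mul, hSz, hTx, hSS, hTT,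
        map_sub, map_smul]
      algebra
    rcases eq_or_ne l j with rfl | hlj
    · simp only [Equiv.swap_apply_of_ne_of_ne hij.symm hjk, hS.map_left_mul, hT.map_left_mul,
        hS.map_right_mul, hT.map_right_mul, hSz, hTx, map_add, map_sub, map_smul]
      algebra
    rcases eq_or_ne l k with rfl | hlk
    · simp only [Equiv.swap_apply_right, hS.map_right_mul, hT.map_left_mul, hT.map_right_mul, hSz,
        hTx, hSS, hTT, map_add, map_smul]
      algebra
    · simp only [Equiv.swap_apply_of_ne_of_ne hli hlk, hS.map_mul_of_ne l hli hlj,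
        hT.map_mul_of_ne l hlj hlk, mul_sub]
  · simp only [LinearMap.sub_apply, Module.End.mul_apply, map_smul, hS.map_one, hT.map_one,
      sub_self]

lemma intertwine {φ : Laur R n ≃ₐ[R] Laur R n} {σ : Equiv.Perm (Fin n)} {c : Fin n → R}
    (hφ : ∀ l, φ (Xel l) = c l • Xel (σ l)) (hc : c i = c j) (hT : IsDemazureLusztig a b i j T)
    (hS : IsDemazureLusztig a b (σ i) (σ j) S) (p : Laur R n) : S (φ p) = φ (T p) := by
  suffices hU : S ∘ₗ φ.toLinearMap - φ.toLinearMap ∘ₗ T = 0 from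
    LinearMap.congr_fun (sub_eq_zero.1 hU) p
  refine eq_zero_of_map_Xel_mul (φ.toAlgHom.comp (permute (Equiv.swap i j)).toAlgHom)
    (fun l p => ?_) ?_
  · simp only [LinearMap.sub_apply, LinearMap.comp_apply, AlgEquiv.toLinearMap_apply,
      AlgHom.comp_apply, AlgEquiv.toAlgHom_apply, permute_Xel]
    rcases eq_or_ne l i with rfl | hli
    · simp only [Equiv.swap_apply_left, hT.map_left_mul, hφ, hS.map_left_mul, map_mul, map_sub,
        map_smul, smul_mul_assoc, hc]
      algebra
    rcases eq_or_ne l j with rfl | hlj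
    · simp only [Equiv.swap_apply_right, hT.map_right_mul, hφ, hS.map_right_mul, map_mul, map_add,
        map_smul, smul_mul_assoc, hc]
      algebra
    · simp only [Equiv.swap_apply_of_ne_of_ne hli hlj, hT.map_mul_of_ne l hli hlj, hφ,
        hS.map_mul_of_ne (σ l) (σ.injective.ne hli) (σ.injective.ne hlj), map_mul, map_smul,
        smul_mul_assoc, mul_sub]
  · simp only [LinearMap.sub_apply, LinearMap.comp_apply, AlgEquiv.toLinearMap_apply,
      _root_.map_one, hT.map_one, hS.map_one, map_smul, sub_self]

lemma mul_XinvEl_mul (hT : IsDemazureLusztig a b i j T) (p : Laur R n) :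
    T (XinvEl j * T p) = (a * b) • (XinvEl i * p) := by
  have hinv : T (XinvEl j * T p) = XinvEl i * (T (T p) - (a - b) • T p) := by
    have h := hT.map_right_mul (XinvEl j * T p)
    rw [← mul_assoc, Xel_mul_XinvEl, one_mul] at h
    rw [h, add_sub_cancel_right, ← mul_assoc, mul_comm (XinvEl i) (Xel i), Xel_mul_XinvEl, one_mul]
  have hTT : T (T p) = (a - b) • T p + (a * b) • p := LinearMap.congr_fun hT.mul_self p
  rw [hinv, hTT, add_sub_cancel_left, mul_smul_comm]

lemma map_XinvEl_mul_of_ne (hT : IsDemazureLusztig a b i j T) (hli : l ≠ i) (hlj : l ≠ j)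
    (p : Laur R n) : T (XinvEl l * p) = XinvEl l * T p := by
  have h := hT.map_mul_of_ne l hli hlj (XinvEl l * p)
  rw [← mul_assoc, Xel_mul_XinvEl, one_mul] at h
  rw [h, ← mul_assoc, mul_comm (XinvEl l) (Xel l), Xel_mul_XinvEl, one_mul]

/-- The Demazure–Lusztig operator as a unit, for `ab = 1`. -/
@[simps] def toUnit (hT : IsDemazureLusztig a b i j T) (hab : a * b = 1) :
    (Module.End R (Laur R n))ˣ where
  val := T
  inv := T + (b - a) • 1
  val_inv := by
    rw [mul_add, hT.mul_self, hab, mul_smul_comm, mul_one]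
    module
  inv_val := by
    rw [add_mul, hT.mul_self, hab, smul_mul_assoc, one_mul]
    module

lemma exists_units {τ : Rˣ} {T : ℕ → Module.End R (Laur R n)}
    (hT : ∀ k (hk : k + 1 < n), IsDemazureLusztig (τ : R) ↑τ⁻¹ ⟨k, by omega⟩ ⟨k + 1, hk⟩ (T k)) :
    ∃ U : ℕ → (Module.End R (Laur R n))ˣ, ∀ k, k + 1 < n →
      T k = U k ∧ T k + ((↑τ⁻¹ : R) - τ) • 1 = ↑(U⁻¹ k) :=
  ⟨fun k => if hk : k + 1 < n then (hT k hk).toUnit τ.mul_inv else 1, fun k hk => by simp [hk]⟩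

end IsDemazureLusztig

end DemazureLusztig

section CyclicShift

variable [NeZero n] {q : Rˣ}

lemma finRotate_inv_succ {k : ℕ} (hk : k + 1 < n) :
    (finRotate n)⁻¹ ⟨k + 1, hk⟩ = ⟨k, Nat.lt_of_succ_lt hk⟩ :=
  Fin.ext <| coe_finRotate_symm_of_ne_zero <| by simp [Fin.ext_iff]

lemma finRotate_inv_zero :
    (finRotate n)⁻¹ 0 = ⟨n - 1, Nat.sub_one_lt (NeZero.ne n)⟩ := by
  obtain ⟨m, rfl⟩ := Nat.exists_eq_succ_of_ne_zero (NeZero.ne n)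
  exact Equiv.Perm.inv_eq_iff_eq.2 finRotate_last.symm

lemma cyclicShift_mono (q : Rˣ) (a : Fin n →₀ ℤ) (c : R) :
    cyclicShift n q (mono a c)
      = (↑(q ^ a 0) : R) • mono (Finsupp.equivMapDomain (finRotate n).symm a) c := by
  rw [cyclicShift, AlgEquiv.mul_apply, scaleVar_mono, map_smul, permute_mono]
  rfl

lemma cyclicShift_Xel (q : Rˣ) (i : Fin n) :
    cyclicShift n q (Xel i) = (if i = 0 then (q : R) else 1) • Xel ((finRotate n)⁻¹ i) := by
  rw [Xel, cyclicShift_mono, Finsupp.equivMapDomain_single, Finsupp.single_apply]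
  split_ifs <;> simp [Xel]

lemma cyclicShift_XinvEl (q : Rˣ) (i : Fin n) :
    cyclicShift n q (XinvEl i)
      = (if i = 0 then (↑q⁻¹ : R) else 1) • XinvEl ((finRotate n)⁻¹ i) := by
  rw [XinvEl, cyclicShift_mono, Finsupp.equivMapDomain_single, Finsupp.single_apply]
  split_ifs <;> simp [XinvEl]

lemma cyclicShift_cyclicShift_Xel (q : Rˣ) (i : Fin n) :
    (cyclicShift n q * cyclicShift n q) (Xel i)
      = ((if i = 0 then (q : R) else 1) * if (finRotate n)⁻¹ i = 0 then (q : R) else 1)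
        • Xel (((finRotate n)⁻¹ * (finRotate n)⁻¹) i) := by
  rw [AlgEquiv.mul_apply, cyclicShift_Xel, map_smul, cyclicShift_Xel, smul_smul,
    Equiv.Perm.mul_apply]

variable {a b : R} {S T : Module.End R (Laur R n)}

lemma IsDemazureLusztig.mul_cyclicShift {k : ℕ} (hk : k + 2 < n)
    (hS : IsDemazureLusztig a b ⟨k, by omega⟩ ⟨k + 1, by omega⟩ S)
    (hT : IsDemazureLusztig a b ⟨k + 1, by omega⟩ ⟨k + 2, hk⟩ T) :
    S * autUnit (cyclicShift n q) = autUnit (cyclicShift n q) * T := by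
  refine LinearMap.ext fun p => hT.intertwine (cyclicShift_Xel q) ?_ ?_ p
  · simp [Fin.ext_iff]
  · rwa [finRotate_inv_succ, finRotate_inv_succ]

lemma IsDemazureLusztig.mul_cyclicShift_sq {m : ℕ} (hm : m + 2 = n)
    (hS : IsDemazureLusztig a b ⟨m, by omega⟩ ⟨m + 1, by omega⟩ S)
    (hT : IsDemazureLusztig a b ⟨0, by omega⟩ ⟨1, by omega⟩ T) :
    S * autUnit (cyclicShift n q) ^ 2 = autUnit (cyclicShift n q) ^ 2 * T := by
  have hzero : (finRotate n)⁻¹ ⟨0, by omega⟩ = ⟨m + 1, by omega⟩ :=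
    finRotate_inv_zero.trans (Fin.ext (by simp only; omega))
  have hone : (finRotate n)⁻¹ ⟨1, by omega⟩ = ⟨0, by omega⟩ := finRotate_inv_succ (k := 0) _
  rw [sq]
  refine LinearMap.ext fun p => hT.intertwine (cyclicShift_cyclicShift_Xel q) ?_ ?_ p
  · simp [hone, Fin.ext_iff, show n ≠ 1 by omega]
  · rwa [Equiv.Perm.mul_apply, Equiv.Perm.mul_apply, hzero, hone, hzero, finRotate_inv_succ]

lemma isDoubleAffineBraid_of_isDemazureLusztig {T : ℕ → (Module.End R (Laur R n))ˣ} {τ : Rˣ}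
    (hT : ∀ k (hk : k + 1 < n), IsDemazureLusztig (τ : R) ↑τ⁻¹ ⟨k, by omega⟩ ⟨k + 1, hk⟩ (T k)) :
    IsDoubleAffineBraid n q T (autUnit (cyclicShift n q)) XinvOp where
  isBraided :=
    { commute_of_lt := fun k l hkl hl => Units.ext <| (hT k (by omega)).commute (hT l hl)
        (by simp; omega) (by simp; omega) (by simp; omega) (by simp; omega)
      braid := fun k hk => Units.ext <|
        (hT k (by omega)).braid (by simp) (by simp; omega) (by simp) (hT (k + 1) hk) }
  isJucysMurphy :=
    { eq_mul_mul := fun j hj => LinearMap.ext fun p => by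
        have h := (hT j hj).mul_XinvEl_mul p
        simp [XinvOp, mulOp, hj, Nat.lt_of_succ_lt hj, h]
      commute_last := fun k hk => LinearMap.ext fun p => by
        have h := (hT k (by omega)).map_XinvEl_mul_of_ne (l := ⟨n - 1, by omega⟩)
          (by simp; omega) (by simp; omega) p
        simp [XinvOp, mulOp, NeZero.pos n, h] }
  mul_P k hk := Units.ext <| (hT k (by omega)).mul_cyclicShift hk (hT (k + 1) hk)
  mul_P_sq m hm := Units.ext <| (hT m (by omega)).mul_cyclicShift_sq hm (hT 0 (by omega))
  P_mul_succ k hk := LinearMap.ext fun p => by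
    simp [XinvOp, mulOp, hk, Nat.lt_of_succ_lt hk, cyclicShift_XinvEl, finRotate_inv_succ]
  P_mul_zero := LinearMap.ext fun p => by
    simp [XinvOp, mulOp, NeZero.pos n, cyclicShift_XinvEl, finRotate_inv_zero]

end CyclicShift

section Coercion

variable {M : Type*} [Monoid M] {f g : ℕ → M} {U V : ℕ → Mˣ}

lemma aF_eq_coe (hf : ∀ k, k + 1 < n → f k = U k) {s l : ℕ} (hl : s + l < n) :
    aF f s l = ↑(aF U s l) := by
  rw [coe_aF]
  exact aF_congr fun k _ hk => hf k (by omega)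

lemma dF_eq_coe (hf : ∀ k, k + 1 < n → f k = U k) {s l : ℕ} (hl : s + l < n) :
    dF f s l = ↑(dF U s l) := by
  rw [coe_dF]
  exact dF_congr fun k _ hk => hf k (by omega)

lemma Rgen_eq_coe (hf : ∀ k, k + 1 < n → f k = U k) (hg : ∀ k, k + 1 < n → g k = V k)
    {x : M} {u : Mˣ} {i j : ℕ} (hx : j < i → x = u) (hi : i < n) :
    Rgen f g x i j = ↑(Rgen U V u i j) := by
  unfold Rgen
  split_ifs with hji
  · rw [dF_eq_coe hf (by omega), aF_eq_coe hg (by omega), hx hji, Units.val_mul, Units.val_mul]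
  · rw [Units.val_one]

end Coercion

/-- An arbitrary scalar `c` stands in for `(q - q⁻¹)⁻¹`, which need not exist over a commutative
ring. -/
theorem statement6_general (R : Type*) [CommRing R] (n : ℕ) [NeZero n] (q τ : Rˣ) (c : R)
    (W : Equiv.Perm (Fin n) → Module.End R (Laur R n))
    (hW : ∀ (w : Equiv.Perm (Fin n)) (a : Fin n →₀ ℤ) (r : R),
      W w (mono a r) = mono (Finsupp.equivMapDomain w a) r)
    (T Ti : ℕ → Module.End R (Laur R n))
    (hT : ∀ (k : ℕ) (hk : k + 1 < n) (p : Laur R n),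
      (Xel ⟨k + 1, hk⟩ - Xel ⟨k, Nat.lt_of_succ_lt hk⟩) * T k p
        = ((↑τ⁻¹ : R) • Xel ⟨k + 1, hk⟩ - (τ : R) • Xel ⟨k, Nat.lt_of_succ_lt hk⟩)
            * W (Equiv.swap ⟨k, Nat.lt_of_succ_lt hk⟩ ⟨k + 1, hk⟩) p
          + ((τ : R) - ↑τ⁻¹) • (Xel ⟨k + 1, hk⟩ * p))
    (hTi : ∀ k, Ti k = T k + ((↑τ⁻¹ : R) - τ) • (1 : Module.End R (Laur R n)))
    (piInv : Module.End R (Laur R n))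
    (hpiInv : ∀ (a : Fin n →₀ ℤ) (r : R),
      piInv (mono a r)
        = (↑(q ^ a 0) : R) • mono (Finsupp.equivMapDomain (finRotate n).symm a) r)
    (Y : ℕ → Module.End R (Laur R n)) (Yi : Module.End R (Laur R n))
    (hY : ∀ i, Y i = aF T i (n - 1 - i) * piInv * aF Ti 0 i)
    (hYi : Y (n - 1) * Yi = 1)
    (D : ℕ → Module.End R (Laur R n))
    (hD : ∀ i, D i = aF T i (n - 1 - i) * (c • (XinvOp (n - 1) * (Y (n - 1) - Yi)))
      * dF T i (n - 1 - i)) :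
    (∀ i j : ℕ, i < n → j < n → i ≠ j →
      Y i * D j = Rgen Ti T (T i ^ 2) j i * D j * Y i * Rgen T Ti (T j ^ 2) i j) ∧
    (∀ l : ℕ, l < n →
      Y l * dF T 0 l * aF T 0 l * D l
        = (↑q⁻¹ : R) • (D l * aF Ti l (n - 1 - l) * dF Ti l (n - 1 - l) * Y l)) := by
  have hDL (k : ℕ) (hk : k + 1 < n) :
      IsDemazureLusztig (τ : R) ↑τ⁻¹ ⟨k, Nat.lt_of_succ_lt hk⟩ ⟨k + 1, hk⟩ (T k) :=
    .of_mul_eq (by simp) fun p => by rw [hT k hk, eq_permute_of_map_mono (hW _)]; rfl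
  obtain ⟨U, hTU_inv⟩ := IsDemazureLusztig.exists_units hDL
  have hTU (k : ℕ) (hk : k + 1 < n) : T k = U k := (hTU_inv k hk).1
  have hTiU (k : ℕ) (hk : k + 1 < n) : Ti k = ↑(U⁻¹ k) := (hTi k).trans (hTU_inv k hk).2
  set P : (Module.End R (Laur R n))ˣ := autUnit (cyclicShift n q)
  have hP : piInv = P := linearMap_ext_mono fun a c =>
    (hpiInv a c).trans (cyclicShift_mono q a c).symm
  have hU : IsDoubleAffineBraid n q U P XinvOp :=
    isDoubleAffineBraid_of_isDemazureLusztig fun k hk => hTU k hk ▸ hDL k hk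
  have hn : 0 < n := NeZero.pos n
  have hYU (i : ℕ) (hi : i < n) : Y i = ↑(cherednikY n U P i) := by
    rw [hY, hP, aF_eq_coe hTU (by omega), aF_eq_coe hTiU (by omega)]
    simp [cherednikY]
  have hYiU : Yi = ↑(cherednikY n U P (n - 1))⁻¹ := by
    rw [hYU _ (by omega)] at hYi
    exact Units.eq_inv_of_mul_eq_one_left hYi
  have hDU (i : ℕ) (hi : i < n) : D i = dunklD n c U P XinvOp i := by
    rw [hD, dunklD, hYU _ (by omega), hYiU, aF_eq_coe hTU (by omega), dF_eq_coe hTU (by omega)]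
  constructor
  · intro i j hi hj hij
    rw [hYU i hi, hDU j hj, Rgen_eq_coe hTiU hTU (u := U i ^ 2) (fun h => ?_) hj,
      Rgen_eq_coe hTU hTiU (u := U j ^ 2) (fun h => ?_) hi]
    · exact hU.cherednikY_mul_dunklD_of_ne c hi hj hij
    · rw [hTU j (by omega), Units.val_pow_eq_pow_val]
    · rw [hTU i (by omega), Units.val_pow_eq_pow_val]
  · intro l hl
    rw [hYU l hl, hDU l hl, dF_eq_coe hTU (by omega), aF_eq_coe hTU (by omega),
      aF_eq_coe hTiU (by omega), dF_eq_coe hTiU (by omega)]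
    exact hU.cherednikY_mul_dF_mul_aF_mul_dunklD c hl

/-- Relations between `Y_i` and `D_j` (indices `0`-based):
`Y_i D_j = (ℛ⁻¹)⁺_{ji} D_j Y_i ℛ⁺_{ij}` for `i ≠ j`, and
`Y_l T⁻_{l-1,1} T⁺_{1,l-1} D_l = q⁻¹ D_l (T⁻¹)⁺_{l,n-1} (T⁻¹)⁻_{n-1,l} Y_l`. -/
theorem statement6
    (F : Type*) [Field F] (n : ℕ) [NeZero n]
    (q τ : F) (hq : q ≠ 0) (hqroot : ∀ m : ℕ, m ≠ 0 → q ^ m ≠ 1) (hτ : τ ≠ 0)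
    -- the action of the symmetric group permuting the variables
    (W : Equiv.Perm (Fin n) → Module.End F (Laur F n))
    (hW : ∀ (w : Equiv.Perm (Fin n)) (a : Fin n →₀ ℤ) (c : F),
      W w (mono a c) = mono (Finsupp.equivMapDomain w a) c)
    -- the Demazure–Lusztig operators `T_k` and their inverses `Ti k = T k + τ⁻¹ - τ`
    (T Ti : ℕ → Module.End F (Laur F n))
    (hT : ∀ (k : ℕ) (hk : k + 1 < n) (p : Laur F n),
      (Xel ⟨k + 1, hk⟩ - Xel ⟨k, Nat.lt_of_succ_lt hk⟩) * T k p
        = (τ⁻¹ • Xel ⟨k + 1, hk⟩ - τ • Xel ⟨k, Nat.lt_of_succ_lt hk⟩)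
            * W (Equiv.swap ⟨k, Nat.lt_of_succ_lt hk⟩ ⟨k + 1, hk⟩) p
          + (τ - τ⁻¹) • (Xel ⟨k + 1, hk⟩ * p))
    (hTi : ∀ k, Ti k = T k + (τ⁻¹ - τ) • (1 : Module.End F (Laur F n)))
    (hTinv : ∀ k, k + 1 < n → T k * Ti k = 1 ∧ Ti k * T k = 1)
    -- the operator `π⁻¹`
    (piInv : Module.End F (Laur F n))
    (hpiInv : ∀ (a : Fin n →₀ ℤ) (c : F),
      piInv (mono a c)
        = q ^ (a 0) • mono (Finsupp.equivMapDomain (finRotate n).symm a) c)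
    -- the operators `Y_i = T_i ⋯ T_{n-1} ⬝ π⁻¹ ⬝ T_1⁻¹ ⋯ T_{i-1}⁻¹` and their inverses
    (Y Yi : ℕ → Module.End F (Laur F n))
    (hY : ∀ i, Y i = aF T i (n - 1 - i) * piInv * aF Ti 0 i)
    (hYinv : ∀ i, i < n → Y i * Yi i = 1 ∧ Yi i * Y i = 1)
    -- the `q`-Dunkl-type operators `D_i`
    (D : ℕ → Module.End F (Laur F n))
    (hD : ∀ i, D i = aF T i (n - 1 - i)
        * ((q - q⁻¹)⁻¹ • (XinvOp (n - 1) * (Y (n - 1) - Yi (n - 1))))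
        * dF T i (n - 1 - i))
    :
    (∀ i j : ℕ, i < n → j < n → i ≠ j →
      Y i * D j = Rgen Ti T (T i ^ 2) j i * D j * Y i * Rgen T Ti (T j ^ 2) i j) ∧
    (∀ l : ℕ, l < n →
      Y l * dF T 0 l * aF T 0 l * D l
        = q⁻¹ • (D l * aF Ti l (n - 1 - l) * dF Ti l (n - 1 - l) * Y l)) := by
  exact statement6_general F n (Units.mk0 q hq) (Units.mk0 τ hτ) (q - q⁻¹)⁻¹ W hW T Ti
    (by simpa using hT) (by simpa using hTi) piInv (by simpa using hpiInv) Y (Yi (n - 1)) hY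
    (hYinv (n - 1) (Nat.sub_one_lt (NeZero.ne n))).1 D hD
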